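/- For all 0 ≤ t ≤ 1, all positive definite X, Y ∈ M_m(ℂ), all K ∈ M_m(ℂ), and all Schwarz maps Φ : M_n(ℂ) → M_m(ℂ) with Φ†(I) positive definite, it holds that tr[Φ†(K*) Φ†(Y)^{t-1} Φ†(K) Φ†(X)^{-t}] ≤ tr[K* Y^{t-1} K X^{-t}]. -/

import Mathlib

open Matrix
open scoped ComplexOrder

/-- Real power of a matrix, defined spectrally for Hermitian matrices (junk value `0` otherwise). -/
noncomputable def mpow {k : ℕ} (A : Matrix (Fin k) (Fin k) ℂ) (p : ℝ) : Matrix (Fin k) (Fin k) ℂ :=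
  if hA : A.IsHermitian then
    (hA.eigenvectorUnitary : Matrix (Fin k) (Fin k) ℂ) *
      Matrix.diagonal (fun i => ((hA.eigenvalues i ^ p : ℝ) : ℂ)) *
      (hA.eigenvectorUnitary : Matrix (Fin k) (Fin k) ℂ)ᴴ
  else 0

/-- A Schwarz map: `Φ(K*K) ≥ Φ(K)*Φ(K)` for all `K`. -/
def IsSchwarz {a b : ℕ} (Φ : Matrix (Fin a) (Fin a) ℂ →ₗ[ℂ] Matrix (Fin b) (Fin b) ℂ) : Prop :=
  ∀ K, (Φ (Kᴴ * K) - (Φ K)ᴴ * Φ K).PosSemidef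

/-- A positive map: sends positive semidefinite matrices to positive semidefinite matrices. -/
def IsPositiveMap {a b : ℕ} (Φ : Matrix (Fin a) (Fin a) ℂ →ₗ[ℂ] Matrix (Fin b) (Fin b) ℂ) : Prop :=
  ∀ X, X.PosSemidef → (Φ X).PosSemidef

/-- `Ψ` is the Hilbert–Schmidt adjoint of `Φ`: `⟨X, Φ Y⟩ = ⟨Ψ X, Y⟩`. -/
def IsHSAdjoint {a b : ℕ} (Φ : Matrix (Fin a) (Fin a) ℂ →ₗ[ℂ] Matrix (Fin b) (Fin b) ℂ)
    (Ψ : Matrix (Fin b) (Fin b) ℂ →ₗ[ℂ] Matrix (Fin a) (Fin a) ℂ) : Prop :=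
  ∀ X Y, (Xᴴ * Φ Y).trace = ((Ψ X)ᴴ * Y).trace

/-!
Left multiplication by `Y` and right multiplication by `X` commute, so the trace in question is
the quadratic form of `f(L_Y, R_X)` at `K` with `f y x = y ^ (t - 1) * x ^ (-t)`. For `0 < t < 1`
this `f` is a positive mixture of the resolvents `(y + l * x)⁻¹`, and for `t = 0, 1` it is the
degenerate resolvent `y⁻¹`, `x⁻¹`. It therefore suffices to treat `(a * y + b * x)⁻¹`, where
`⟨K, (a L_Y + b R_X)⁻¹ K⟩` is the maximum over `W` of
`2 Re ⟨W, K⟩ - a tr (W* Y W) - b tr (W* W X)`. Substituting `Φ W` for `W` in the problem for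
`(X, Y, K)` reproduces the pairing `⟨W, Φ†(K)⟩`, and pairing the Schwarz inequality for `W` with
`X`, and for `W*` with `Y`, shows that the two subtracted terms do not increase.
-/

section ScalarInequalities

open MeasureTheory Set

theorem exists_measure_rpow_mul_rpow_eq_integral {t : ℝ} (ht : t ∈ Ioo 0 1) :
    ∃ μ : Measure ℝ, ∀ y x : ℝ, 0 < y → 0 < x →
      IntegrableOn (fun l => l ^ (t - 1) * (y + l * x)⁻¹) (Ioi 0) μ ∧
      y ^ (t - 1) * x ^ (-t) = ∫ l in Ioi 0, l ^ (t - 1) * (y + l * x)⁻¹ ∂μ := by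
  obtain ⟨μ, hμ⟩ := Real.exists_measure_rpow_eq_integral_rpowIntegrand₀₁ ht
  refine ⟨μ, fun y x hy hx => ?_⟩
  have hyx : 0 < y / x := div_pos hy hx
  obtain ⟨hint, hpow⟩ := hμ (y / x) hyx.le
  have hcongr : EqOn (fun l => y⁻¹ * Real.rpowIntegrand₀₁ t l (y / x))
      (fun l => l ^ (t - 1) * (y + l * x)⁻¹) (Ioi 0) := fun l (hl : 0 < l) => by
    simp only [Real.rpowIntegrand₀₁_eq_pow_div ht hl.le hyx.le]
    field_simp
    ring
  refine ⟨IntegrableOn.congr_fun (hint.const_mul y⁻¹) hcongr measurableSet_Ioi, ?_⟩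
  rw [← setIntegral_congr_fun measurableSet_Ioi hcongr, integral_const_mul, ← hpow,
    Real.div_rpow hy.le hx.le, Real.rpow_sub_one hy.ne', Real.rpow_neg hx.le]
  ring

theorem mul_add_mul_pos {a b y x : ℝ} (ha : 0 ≤ a) (hb : 0 ≤ b) (hab : 0 < a + b)
    (hy : 0 < y) (hx : 0 < x) : 0 < a * y + b * x := by
  rcases ha.eq_or_lt with rfl | ha
  · rw [zero_add] at hab
    positivity
  · positivity

theorem two_mul_re_star_mul_sub_le {𝕜 : Type*} [RCLike 𝕜] {c : ℝ} (hc : 0 < c) (w k : 𝕜) :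
    2 * RCLike.re (star w * k) - c * ‖w‖ ^ 2 ≤ c⁻¹ * ‖k‖ ^ 2 := by
  have hre : RCLike.re (star w * k) ≤ ‖w‖ * ‖k‖ := by
    simpa using RCLike.re_le_norm (star w * k)
  have hsq : c⁻¹ * ‖k‖ ^ 2 - 2 * (‖w‖ * ‖k‖) + c * ‖w‖ ^ 2 = c⁻¹ * (‖k‖ - c * ‖w‖) ^ 2 := by
    field_simp
    ring
  have := mul_nonneg (inv_nonneg.2 hc.le) (sq_nonneg (‖k‖ - c * ‖w‖))
  linarith

theorem two_mul_re_star_inv_mul_sub {𝕜 : Type*} [RCLike 𝕜] {c : ℝ} (hc : c ≠ 0) (k : 𝕜) :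
    2 * RCLike.re (star (((c⁻¹ : ℝ) : 𝕜) * k) * k) - c * ‖((c⁻¹ : ℝ) : 𝕜) * k‖ ^ 2 =
      c⁻¹ * ‖k‖ ^ 2 := by
  have hre : RCLike.re (star (((c⁻¹ : ℝ) : 𝕜) * k) * k) = c⁻¹ * ‖k‖ ^ 2 := by
    rw [RCLike.star_def, map_mul (starRingEnd 𝕜), RCLike.conj_ofReal, mul_assoc, RCLike.conj_mul,
      ← RCLike.ofReal_pow, RCLike.re_ofReal_mul, RCLike.ofReal_re]
  rw [hre, norm_mul, RCLike.norm_ofReal, mul_pow, sq_abs]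
  field_simp
  ring

end ScalarInequalities

section SpectralForm

variable {𝕜 m n : Type*} [RCLike 𝕜] [Fintype m] [DecidableEq m] [Fintype n] [DecidableEq n]
  {Y : Matrix m m 𝕜} {X : Matrix n n 𝕜} (hY : Y.IsHermitian) (hX : X.IsHermitian)

/-- The matrix of `K` with respect to the chosen orthonormal eigenbases of `X` (source) and `Y`
(target). -/
noncomputable def toEigenbases (K : Matrix m n 𝕜) : Matrix m n 𝕜 :=
  (hY.eigenvectorUnitary : Matrix m m 𝕜)ᴴ * K * (hX.eigenvectorUnitary : Matrix n n 𝕜)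

theorem toEigenbases_surjective : Function.Surjective (toEigenbases hY hX) := fun Z => by
  refine ⟨(hY.eigenvectorUnitary : Matrix m m 𝕜) * Z * (hX.eigenvectorUnitary : Matrix n n 𝕜)ᴴ, ?_⟩
  have hU : (hY.eigenvectorUnitary : Matrix m m 𝕜)ᴴ * hY.eigenvectorUnitary = 1 :=
    Unitary.coe_star_mul_self _
  have hV : (hX.eigenvectorUnitary : Matrix n n 𝕜)ᴴ * hX.eigenvectorUnitary = 1 :=
    Unitary.coe_star_mul_self _
  rw [toEigenbases, ← Matrix.mul_assoc, ← Matrix.mul_assoc, hU, Matrix.one_mul, Matrix.mul_assoc,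
    hV, Matrix.mul_one]

theorem toEigenbases_cfc_mul_mul_cfc (f g : ℝ → ℝ) (K : Matrix m n 𝕜) (i : m) (j : n) :
    toEigenbases hY hX (cfc f Y * K * cfc g X) i j =
      ((f (hY.eigenvalues i) * g (hX.eigenvalues j) : ℝ) : 𝕜) * toEigenbases hY hX K i j := by
  have hU : (hY.eigenvectorUnitary : Matrix m m 𝕜)ᴴ * cfc f Y =
      diagonal (fun i => (f (hY.eigenvalues i) : 𝕜)) * (hY.eigenvectorUnitary : Matrix m m 𝕜)ᴴ := by
    rw [hY.cfc_eq, Matrix.IsHermitian.cfc, Unitary.conjStarAlgAut_apply, ← star_eq_conjTranspose,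
      Matrix.mul_assoc, ← Matrix.mul_assoc, Unitary.coe_star_mul_self, Matrix.one_mul]
    rfl
  have hV : cfc g X * (hX.eigenvectorUnitary : Matrix n n 𝕜) =
      (hX.eigenvectorUnitary : Matrix n n 𝕜) * diagonal (fun j => (g (hX.eigenvalues j) : 𝕜)) := by
    rw [hX.cfc_eq, Matrix.IsHermitian.cfc, Unitary.conjStarAlgAut_apply, Matrix.mul_assoc,
      Unitary.coe_star_mul_self, Matrix.mul_one]
    rfl
  have hdiag : toEigenbases hY hX (cfc f Y * K * cfc g X) =
      diagonal (fun i => (f (hY.eigenvalues i) : 𝕜)) * toEigenbases hY hX K *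
        diagonal (fun j => (g (hX.eigenvalues j) : 𝕜)) := by
    simp only [toEigenbases, Matrix.mul_assoc, hV]
    simp only [← Matrix.mul_assoc, hU]
  rw [hdiag, mul_diagonal, diagonal_mul, RCLike.ofReal_mul]
  ring

theorem trace_conjTranspose_mul_eq_sum_toEigenbases (W K : Matrix m n 𝕜) :
    (Wᴴ * K).trace = ∑ i, ∑ j, star (toEigenbases hY hX W i j) * toEigenbases hY hX K i j := by
  have hU : (hY.eigenvectorUnitary : Matrix m m 𝕜) * (hY.eigenvectorUnitary : Matrix m m 𝕜)ᴴ = 1 :=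
    Unitary.coe_mul_star_self _
  have hV : (hX.eigenvectorUnitary : Matrix n n 𝕜) * (hX.eigenvectorUnitary : Matrix n n 𝕜)ᴴ = 1 :=
    Unitary.coe_mul_star_self _
  calc (Wᴴ * K).trace
    _ = (Wᴴ * ((hY.eigenvectorUnitary : Matrix m m 𝕜) *
          (hY.eigenvectorUnitary : Matrix m m 𝕜)ᴴ) * K *
          ((hX.eigenvectorUnitary : Matrix n n 𝕜) *
          (hX.eigenvectorUnitary : Matrix n n 𝕜)ᴴ)).trace := by
      rw [hU, hV, Matrix.mul_one, Matrix.mul_one]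
    _ = ((toEigenbases hY hX W)ᴴ * toEigenbases hY hX K).trace := by
      rw [← Matrix.mul_assoc _ _ (_ᴴ), Matrix.trace_mul_comm _ (_ᴴ)]
      simp only [toEigenbases, conjTranspose_mul, conjTranspose_conjTranspose, Matrix.mul_assoc]
    _ = ∑ i, ∑ j, star (toEigenbases hY hX W i j) * toEigenbases hY hX K i j := by
      rw [Finset.sum_comm]
      rfl

/-- The Hilbert–Schmidt quadratic form `⟨K, f(L_Y, R_X) K⟩`, where `f(L_Y, R_X)` is the joint
functional calculus of the commuting operators of left multiplication by `Y` and right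
multiplication by `X`, written out in eigenbases of `Y` and `X`. -/
noncomputable def spectralForm (f : ℝ → ℝ → ℝ) (K : Matrix m n 𝕜) : ℝ :=
  ∑ i, ∑ j, f (hY.eigenvalues i) (hX.eigenvalues j) * ‖toEigenbases hY hX K i j‖ ^ 2

theorem re_trace_mul_cfc_mul_mul_cfc (f g : ℝ → ℝ) (K : Matrix m n 𝕜) :
    RCLike.re (Kᴴ * cfc f Y * K * cfc g X).trace =
      spectralForm hY hX (fun y x => f y * g x) K := by
  rw [Matrix.mul_assoc, Matrix.mul_assoc, ← Matrix.mul_assoc (cfc f Y),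
    trace_conjTranspose_mul_eq_sum_toEigenbases hY hX]
  simp only [map_sum, spectralForm, toEigenbases_cfc_mul_mul_cfc]
  refine Finset.sum_congr rfl fun i _ => Finset.sum_congr rfl fun j _ => ?_
  rw [mul_left_comm, RCLike.re_ofReal_mul, RCLike.star_def, RCLike.conj_mul, ← RCLike.ofReal_pow,
    RCLike.ofReal_re]

theorem spectralForm_linear (a b : ℝ) (K : Matrix m n 𝕜) :
    spectralForm hY hX (fun y x => a * y + b * x) K =
      a * RCLike.re (Kᴴ * Y * K).trace + b * RCLike.re (Kᴴ * K * X).trace := by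
  have hleft := re_trace_mul_cfc_mul_mul_cfc hY hX (fun y => y) (fun _ => 1) K
  have hright := re_trace_mul_cfc_mul_mul_cfc hY hX (fun _ => 1) (fun x => x) K
  rw [cfc_id' ℝ Y hY.isSelfAdjoint, cfc_const_one ℝ X, Matrix.mul_one] at hleft
  rw [cfc_id' ℝ X hX.isSelfAdjoint, cfc_const_one ℝ Y, Matrix.mul_one] at hright
  simp only [hleft, hright, spectralForm, Finset.mul_sum, ← Finset.sum_add_distrib]
  exact Finset.sum_congr rfl fun i _ => Finset.sum_congr rfl fun j _ => by ring

theorem spectralForm_congr {f g : ℝ → ℝ → ℝ}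
    (hfg : ∀ i j, f (hY.eigenvalues i) (hX.eigenvalues j) =
      g (hY.eigenvalues i) (hX.eigenvalues j)) (K : Matrix m n 𝕜) :
    spectralForm hY hX f K = spectralForm hY hX g K := by
  simp only [spectralForm, hfg]

theorem spectralForm_const_mul (c : ℝ) (f : ℝ → ℝ → ℝ) (K : Matrix m n 𝕜) :
    spectralForm hY hX (fun y x => c * f y x) K = c * spectralForm hY hX f K := by
  simp only [spectralForm, Finset.mul_sum, mul_assoc]

section Integral

open MeasureTheory

variable {α : Type*} [MeasurableSpace α] {μ : Measure α} {f : α → ℝ → ℝ → ℝ}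

theorem integrable_spectralForm
    (hf : ∀ i j, Integrable (fun l => f l (hY.eigenvalues i) (hX.eigenvalues j)) μ)
    (K : Matrix m n 𝕜) : Integrable (fun l => spectralForm hY hX (f l) K) μ :=
  integrable_finsetSum _ fun i _ => integrable_finsetSum _ fun j _ => (hf i j).mul_const _

theorem integral_spectralForm
    (hf : ∀ i j, Integrable (fun l => f l (hY.eigenvalues i) (hX.eigenvalues j)) μ)
    (K : Matrix m n 𝕜) :
    ∫ l, spectralForm hY hX (f l) K ∂μ = spectralForm hY hX (fun y x => ∫ l, f l y x ∂μ) K := by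
  have hterm (i : m) (j : n) : Integrable (fun l => f l (hY.eigenvalues i) (hX.eigenvalues j) *
      ‖toEigenbases hY hX K i j‖ ^ 2) μ := (hf i j).mul_const _
  simp only [spectralForm]
  rw [integral_finsetSum _ fun i _ => integrable_finsetSum _ fun j _ => hterm i j]
  simp_rw [integral_finsetSum _ fun j _ => hterm _ j, integral_mul_const]

end Integral

theorem isGreatest_spectralForm_inv {f : ℝ → ℝ → ℝ}
    (hf : ∀ i j, 0 < f (hY.eigenvalues i) (hX.eigenvalues j)) (K : Matrix m n 𝕜) :
    IsGreatest (Set.range fun W => 2 * RCLike.re (Wᴴ * K).trace - spectralForm hY hX f W)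
      (spectralForm hY hX (fun y x => (f y x)⁻¹) K) := by
  have hsum (W : Matrix m n 𝕜) : 2 * RCLike.re (Wᴴ * K).trace - spectralForm hY hX f W =
      ∑ i, ∑ j, (2 * RCLike.re (star (toEigenbases hY hX W i j) * toEigenbases hY hX K i j) -
        f (hY.eigenvalues i) (hX.eigenvalues j) * ‖toEigenbases hY hX W i j‖ ^ 2) := by
    simp only [trace_conjTranspose_mul_eq_sum_toEigenbases hY hX, map_sum, spectralForm,
      Finset.mul_sum, Finset.sum_sub_distrib]
  constructor
  · obtain ⟨W, hW⟩ := toEigenbases_surjective hY hX <| Matrix.of fun i j =>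
      (((f (hY.eigenvalues i) (hX.eigenvalues j))⁻¹ : ℝ) : 𝕜) * toEigenbases hY hX K i j
    refine ⟨W, (hsum W).trans ?_⟩
    simp only [hW, Matrix.of_apply, two_mul_re_star_inv_mul_sub (hf _ _).ne', spectralForm]
  · rintro _ ⟨W, rfl⟩
    refine (hsum W).trans_le ?_
    exact Finset.sum_le_sum fun i _ => Finset.sum_le_sum fun j _ =>
      two_mul_re_star_mul_sub_le (hf i j) _ _

end SpectralForm

section Comparison

variable {𝕜 m n m' n' : Type*} [RCLike 𝕜] [Fintype m] [DecidableEq m] [Fintype n] [DecidableEq n]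
  [Fintype m'] [DecidableEq m'] [Fintype n'] [DecidableEq n']
  {Y : Matrix m m 𝕜} {X : Matrix n n 𝕜} {Y' : Matrix m' m' 𝕜} {X' : Matrix n' n' 𝕜}
  {K : Matrix m n 𝕜} {K' : Matrix m' n' 𝕜}

theorem spectralForm_inv_le_of_adjoint {hY : Y.IsHermitian} {hX : X.IsHermitian}
    {hY' : Y'.IsHermitian} {hX' : X'.IsHermitian} {f : ℝ → ℝ → ℝ}
    (hf : ∀ i j, 0 < f (hY.eigenvalues i) (hX.eigenvalues j))
    (hf' : ∀ i j, 0 < f (hY'.eigenvalues i) (hX'.eigenvalues j))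
    (T : Matrix m' n' 𝕜 → Matrix m n 𝕜)
    (hT : ∀ W, (Wᴴ * K').trace = ((T W)ᴴ * K).trace)
    (hle : ∀ W, spectralForm hY hX f (T W) ≤ spectralForm hY' hX' f W) :
    spectralForm hY' hX' (fun y x => (f y x)⁻¹) K' ≤
      spectralForm hY hX (fun y x => (f y x)⁻¹) K := by
  obtain ⟨W, hW⟩ := (isGreatest_spectralForm_inv hY' hX' hf' K').1
  calc spectralForm hY' hX' (fun y x => (f y x)⁻¹) K'
    _ = 2 * RCLike.re ((T W)ᴴ * K).trace - spectralForm hY' hX' f W := by rw [← hT, ← hW]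
    _ ≤ 2 * RCLike.re ((T W)ᴴ * K).trace - spectralForm hY hX f (T W) := by gcongr; exact hle W
    _ ≤ spectralForm hY hX (fun y x => (f y x)⁻¹) K :=
      (isGreatest_spectralForm_inv hY hX hf K).2 ⟨T W, rfl⟩

open MeasureTheory Set in
theorem spectralForm_rpow_le_of_forall_resolvent_le (hY : Y.PosDef) (hX : X.PosDef)
    (hY' : Y'.PosDef) (hX' : X'.PosDef)
    (hres : ∀ a b : ℝ, 0 ≤ a → 0 ≤ b → 0 < a + b →
      spectralForm hY'.isHermitian hX'.isHermitian (fun y x => (a * y + b * x)⁻¹) K' ≤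
        spectralForm hY.isHermitian hX.isHermitian (fun y x => (a * y + b * x)⁻¹) K)
    {t : ℝ} (ht : t ∈ Icc 0 1) :
    spectralForm hY'.isHermitian hX'.isHermitian (fun y x => y ^ (t - 1) * x ^ (-t)) K' ≤
      spectralForm hY.isHermitian hX.isHermitian (fun y x => y ^ (t - 1) * x ^ (-t)) K := by
  rcases ht.1.eq_or_lt with rfl | ht0
  · simpa [Real.rpow_neg_one] using hres 1 0 zero_le_one le_rfl (by norm_num)
  rcases ht.2.eq_or_lt with rfl | ht1
  · simpa [Real.rpow_neg_one] using hres 0 1 le_rfl zero_le_one (by norm_num)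
  obtain ⟨μ, hμ⟩ := exists_measure_rpow_mul_rpow_eq_integral ⟨ht0, ht1⟩
  have hint i j := (hμ _ _ (hY.eigenvalues_pos i) (hX.eigenvalues_pos j)).1
  have hint' i j := (hμ _ _ (hY'.eigenvalues_pos i) (hX'.eigenvalues_pos j)).1
  calc spectralForm hY'.isHermitian hX'.isHermitian (fun y x => y ^ (t - 1) * x ^ (-t)) K'
    _ = ∫ l in Ioi 0, spectralForm hY'.isHermitian hX'.isHermitian
          (fun y x => l ^ (t - 1) * (y + l * x)⁻¹) K' ∂μ := by
      rw [integral_spectralForm _ _ hint']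
      exact spectralForm_congr _ _
        (fun i j => (hμ _ _ (hY'.eigenvalues_pos i) (hX'.eigenvalues_pos j)).2) K'
    _ ≤ ∫ l in Ioi 0, spectralForm hY.isHermitian hX.isHermitian
          (fun y x => l ^ (t - 1) * (y + l * x)⁻¹) K ∂μ := by
      refine setIntegral_mono_on (integrable_spectralForm _ _ hint' K')
        (integrable_spectralForm _ _ hint K) measurableSet_Ioi fun l (hl : 0 < l) => ?_
      rw [spectralForm_const_mul, spectralForm_const_mul]
      refine mul_le_mul_of_nonneg_left ?_ (Real.rpow_nonneg hl.le _)
      simpa only [one_mul] using hres 1 l zero_le_one hl.le (by positivity)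
    _ = spectralForm hY.isHermitian hX.isHermitian (fun y x => y ^ (t - 1) * x ^ (-t)) K := by
      rw [integral_spectralForm _ _ hint]
      exact (spectralForm_congr _ _
        (fun i j => (hμ _ _ (hY.eigenvalues_pos i) (hX.eigenvalues_pos j)).2) K).symm

end Comparison

section PositiveMaps

open scoped MatrixOrder

theorem trace_mul_nonneg_of_posSemidef {𝕜 m : Type*} [RCLike 𝕜] [Fintype m] {P Q : Matrix m m 𝕜}
    (hP : P.PosSemidef) (hQ : Q.PosSemidef) : 0 ≤ (P * Q).trace := by
  classical
  obtain ⟨B, rfl⟩ := CStarAlgebra.nonneg_iff_eq_star_mul_self.mp hP.nonneg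
  rw [Matrix.mul_assoc, Matrix.trace_mul_comm]
  exact (hQ.mul_mul_conjTranspose_same B).trace_nonneg

theorem exists_pos_smul_one_le_of_posDef {𝕜 m : Type*} [RCLike 𝕜] [Finite m] [DecidableEq m]
    {P : Matrix m m 𝕜} (hP : P.PosDef) : ∃ c : ℝ, 0 < c ∧ (c : 𝕜) • 1 ≤ P := by
  cases nonempty_fintype m
  cases subsingleton_or_nontrivial (Matrix m m 𝕜)
  · exact ⟨1, one_pos, (Subsingleton.elim _ _).le⟩
  · obtain ⟨c, hc, hcP⟩ := (CFC.exists_pos_algebraMap_le_iff hP.isHermitian.isSelfAdjoint).2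
      fun x hx => hP.isStrictlyPositive.spectrum_pos hx
    refine ⟨c, hc, ?_⟩
    rwa [Algebra.algebraMap_eq_smul_one, RCLike.real_smul_eq_coe_smul (K := 𝕜)] at hcP

variable {a b : ℕ} {Φ : Matrix (Fin a) (Fin a) ℂ →ₗ[ℂ] Matrix (Fin b) (Fin b) ℂ}
  {Ψ : Matrix (Fin b) (Fin b) ℂ →ₗ[ℂ] Matrix (Fin a) (Fin a) ℂ}

theorem IsPositiveMap.map_conjTranspose (hΦ : IsPositiveMap Φ) (K : Matrix (Fin a) (Fin a) ℂ) :
    Φ Kᴴ = (Φ K)ᴴ :=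
  map_star (PositiveLinearMap.mk₀ Φ fun P hP => (hΦ P hP.posSemidef).nonneg) K

theorem IsPositiveMap.map_posDef (hΦ : IsPositiveMap Φ) (hΦ1 : (Φ 1).PosDef)
    {P : Matrix (Fin a) (Fin a) ℂ} (hP : P.PosDef) : (Φ P).PosDef := by
  obtain ⟨c, hc, hcP⟩ := exists_pos_smul_one_le_of_posDef hP
  have hsplit : Φ P = (c : ℂ) • Φ 1 + Φ (P - (c : ℂ) • 1) := by
    rw [map_sub, map_smul, add_sub_cancel]
  rw [hsplit]
  exact (hΦ1.smul (Complex.zero_lt_real.2 hc)).add_posSemidef (hΦ _ hcP)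

theorem IsHSAdjoint.symm (hadj : IsHSAdjoint Φ Ψ) : IsHSAdjoint Ψ Φ := fun X Y => by
  rw [← star_inj, ← trace_conjTranspose, ← trace_conjTranspose]
  simpa using (hadj Y X).symm

theorem IsHSAdjoint.map_conjTranspose (hadj : IsHSAdjoint Φ Ψ) (hΦ : ∀ Z, Φ Zᴴ = (Φ Z)ᴴ)
    (K : Matrix (Fin b) (Fin b) ℂ) : Ψ Kᴴ = (Ψ K)ᴴ := by
  rw [Matrix.ext_iff_trace_mul_right]
  intro Z
  calc (Ψ Kᴴ * Z).trace
    _ = (Zᴴᴴ * Ψ Kᴴ).trace := by rw [conjTranspose_conjTranspose, trace_mul_comm]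
    _ = (Φ Z * Kᴴ).trace := by rw [hadj.symm, hΦ, conjTranspose_conjTranspose]
    _ = ((Ψ K)ᴴ * Z).trace := by rw [trace_mul_comm, hadj]

theorem IsHSAdjoint.isPositiveMap (hadj : IsHSAdjoint Φ Ψ) (hΦ : IsPositiveMap Φ) :
    IsPositiveMap Ψ := fun P hP => by
  have hherm : (Ψ P)ᴴ = Ψ P := by
    rw [← hadj.map_conjTranspose hΦ.map_conjTranspose, hP.isHermitian.eq]
  refine .of_dotProduct_mulVec_nonneg hherm fun v => ?_
  have hquad : star v ⬝ᵥ (Ψ P *ᵥ v) = (P * Φ (vecMulVec v (star v))).trace :=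
    calc star v ⬝ᵥ (Ψ P *ᵥ v)
      _ = ((Ψ P)ᴴ * vecMulVec v (star v)).trace := by
        rw [hherm, mul_vecMulVec, trace_vecMulVec, dotProduct_comm]
      _ = (P * Φ (vecMulVec v (star v))).trace := by rw [← hadj, hP.isHermitian.eq]
  rw [hquad]
  exact trace_mul_nonneg_of_posSemidef hP (hΦ _ (posSemidef_vecMulVec_self_star v))

namespace IsSchwarz

theorem isPositiveMap (hΦ : IsSchwarz Φ) : IsPositiveMap Φ := fun P hP => by
  obtain ⟨B, rfl⟩ := CStarAlgebra.nonneg_iff_eq_star_mul_self.mp hP.nonneg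
  simpa [star_eq_conjTranspose] using (hΦ B).add (posSemidef_conjTranspose_mul_self (Φ B))

theorem re_trace_conjTranspose_mul_self_mul_le (hΦ : IsSchwarz Φ) (hadj : IsHSAdjoint Φ Ψ)
    {P : Matrix (Fin b) (Fin b) ℂ} (hP : P.PosSemidef) (W : Matrix (Fin a) (Fin a) ℂ) :
    ((Φ W)ᴴ * Φ W * P).trace.re ≤ (Wᴴ * W * Ψ P).trace.re := by
  have hdual : (Wᴴ * W * Ψ P).trace = (Φ (Wᴴ * W) * P).trace := by
    have hherm : (Φ (Wᴴ * W))ᴴ = Φ (Wᴴ * W) := by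
      rw [← hΦ.isPositiveMap.map_conjTranspose, (isHermitian_conjTranspose_mul_self W).eq]
    simpa [hherm] using hadj.symm (Wᴴ * W) P
  have hnonneg := trace_mul_nonneg_of_posSemidef (hΦ W) hP
  rw [Matrix.sub_mul, trace_sub, sub_nonneg, ← hdual] at hnonneg
  exact (Complex.le_def.1 hnonneg).1

theorem re_trace_conjTranspose_mul_mul_le (hΦ : IsSchwarz Φ) (hadj : IsHSAdjoint Φ Ψ)
    {P : Matrix (Fin b) (Fin b) ℂ} (hP : P.PosSemidef) (W : Matrix (Fin a) (Fin a) ℂ) :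
    ((Φ W)ᴴ * P * Φ W).trace.re ≤ (Wᴴ * Ψ P * W).trace.re := by
  have h := hΦ.re_trace_conjTranspose_mul_self_mul_le hadj hP Wᴴ
  rw [hΦ.isPositiveMap.map_conjTranspose, conjTranspose_conjTranspose,
    conjTranspose_conjTranspose] at h
  rwa [trace_mul_cycle, trace_mul_cycle Wᴴ]

theorem spectralForm_resolvent_le (hΦ : IsSchwarz Φ) (hadj : IsHSAdjoint Φ Ψ)
    {X Y : Matrix (Fin b) (Fin b) ℂ} (hY : Y.PosDef) (hX : X.PosDef)
    (hY' : (Ψ Y).PosDef) (hX' : (Ψ X).PosDef) {r s : ℝ} (hr : 0 ≤ r) (hs : 0 ≤ s)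
    (hrs : 0 < r + s) (K : Matrix (Fin b) (Fin b) ℂ) :
    spectralForm hY'.isHermitian hX'.isHermitian (fun y x => (r * y + s * x)⁻¹) (Ψ K) ≤
      spectralForm hY.isHermitian hX.isHermitian (fun y x => (r * y + s * x)⁻¹) K := by
  refine spectralForm_inv_le_of_adjoint
    (fun i j => mul_add_mul_pos hr hs hrs (hY.eigenvalues_pos i) (hX.eigenvalues_pos j))
    (fun i j => mul_add_mul_pos hr hs hrs (hY'.eigenvalues_pos i) (hX'.eigenvalues_pos j))
    Φ (fun W => hadj.symm W K) fun W => ?_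
  rw [spectralForm_linear, spectralForm_linear]
  exact add_le_add
    (mul_le_mul_of_nonneg_left (hΦ.re_trace_conjTranspose_mul_mul_le hadj hY.posSemidef W) hr)
    (mul_le_mul_of_nonneg_left (hΦ.re_trace_conjTranspose_mul_self_mul_le hadj hX.posSemidef W) hs)

end IsSchwarz

end PositiveMaps

theorem mpow_eq_cfc {k : ℕ} (A : Matrix (Fin k) (Fin k) ℂ) (p : ℝ) :
    mpow A p = cfc (fun x : ℝ => x ^ p) A := by
  by_cases hA : A.IsHermitian
  · rw [mpow, dif_pos hA, hA.cfc_eq]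
    rfl
  · exact (dif_neg hA).trans (cfc_apply_of_not_predicate A hA).symm

theorem stmt2 {n m : ℕ} (t : ℝ) (ht0 : 0 ≤ t) (ht1 : t ≤ 1)
    (X Y : Matrix (Fin m) (Fin m) ℂ) (hX : X.PosDef) (hY : Y.PosDef)
    (K : Matrix (Fin m) (Fin m) ℂ)
    (Φ : Matrix (Fin n) (Fin n) ℂ →ₗ[ℂ] Matrix (Fin m) (Fin m) ℂ)
    (Ψ : Matrix (Fin m) (Fin m) ℂ →ₗ[ℂ] Matrix (Fin n) (Fin n) ℂ)
    (hΦ : IsSchwarz Φ) (hadj : IsHSAdjoint Φ Ψ) (hΨ1 : (Ψ 1).PosDef) :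
    (Ψ Kᴴ * mpow (Ψ Y) (t - 1) * Ψ K * mpow (Ψ X) (-t)).trace.re ≤
      (Kᴴ * mpow Y (t - 1) * K * mpow X (-t)).trace.re := by
  have hΨ := hadj.isPositiveMap hΦ.isPositiveMap
  have hX' := hΨ.map_posDef hΨ1 hX
  have hY' := hΨ.map_posDef hΨ1 hY
  simp only [hΨ.map_conjTranspose, mpow_eq_cfc, ← RCLike.re_eq_complex_re,
    re_trace_mul_cfc_mul_mul_cfc hY.isHermitian hX.isHermitian,
    re_trace_mul_cfc_mul_mul_cfc hY'.isHermitian hX'.isHermitian]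
  exact spectralForm_rpow_le_of_forall_resolvent_le hY hX hY' hX'
    (fun _ _ hr hs hrs => hΦ.spectralForm_resolvent_le hadj hY hX hY' hX' hr hs hrs K) ⟨ht0, ht1⟩
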